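/- arXiv:1704.03778 — 2 statements merged into one kernel-verified Lean document; each statement's English description precedes it below -/
import Mathlib

section
/- Let F be an algebraically closed field of prime characteristic p, let G be a finite group, and let ρ : G → GL(V) be a finite-dimensional representation of G over F. Let N be the subgroup of G generated by the p-regular elements of ker(ρ), i.e., by {g ∈ ker(ρ) : p does not divide the order of g}. Then: (1) N is a normal subgroup of G; and (2) since N ⊆ ker(ρ), the representation ρ factors through a representation \bar{ρ} : G/N → GL(V), and this representation \bar{ρ} of the quotient group G/N is tensor-rich. -/
open CategoryTheory MonoidalCategory

/-- The `n`-th tensor power of a representation `X` of `G` over `k`, with the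
diagonal `G`-action; `X^{⊗0}` is the trivial one-dimensional representation
(the monoidal unit of `Rep k G`). -/
noncomputable def repTensorPow (k G : Type) [CommRing k] [Monoid G] (X : Rep k G) :
    ℕ → Rep k G
  | 0 => 𝟙_ (Rep k G)
  | n + 1 => repTensorPow k G X n ⊗ X

/-- `S` is a composition factor of the `R`-module `W`: there are submodules
`N ⊆ M ⊆ W` with `M/N ≅ S`. -/
def IsCompositionFactor (R : Type*) [Ring R] (S : Type*) [AddCommGroup S] [Module R S]
    (W : Type*) [AddCommGroup W] [Module R W] : Prop :=
  ∃ N M : Submodule R W, N ≤ M ∧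
    Nonempty ((↥M ⧸ Submodule.comap M.subtype N) ≃ₗ[R] S)

/-- A representation `X ∈ Rep k G` is *tensor-rich* if every simple module over
the group algebra `k[G]` is a composition factor of some tensor power
`X^{⊗n}`. -/
def TensorRich (k G : Type) [CommRing k] [Monoid G] (X : Rep k G) : Prop :=
  ∀ (S : Type) [AddCommGroup S] [Module (MonoidAlgebra k G) S],
    IsSimpleModule (MonoidAlgebra k G) S →
      ∃ n : ℕ,
        IsCompositionFactor (MonoidAlgebra k G) S ((repTensorPow k G X n).ρ.asModule)

/-
Since `N` contains the `p'`-part of every element of `ker ρ`, the kernel of `ρ̄` is a `p`-group, so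
it acts trivially on every simple module. It thus suffices that an element `a` of the group algebra
which kills all tensor powers of `ρ̄` has zero image in the group algebra of `(G/N)/ker ρ̄`: over
an artinian algebra, a simple module killed by the common annihilator of a family of modules is a
composition factor of a member of the family. Products of matrix coefficients of `ρ̄` are matrix
coefficients of tensor powers, and evaluating such products at a fixed endomorphism is a monoid
homomorphism from the free monoid on the coefficients to `F`. Distinct endomorphisms give distinct
homomorphisms, so Dedekind's independence of characters forces the coefficients of `a` to sum to
zero over every fibre of `ρ̄`.
-/

open scoped MonoidAlgebra TensorProduct

section CompositionFactors

variable {A : Type*} [Ring A] {S : Type*} [AddCommGroup S] [Module A S]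

theorem isCompositionFactor_of_ker_le_ker {B M : Type*} [AddCommGroup B] [Module A B]
    [AddCommGroup M] [Module A M] (f : B →ₗ[A] M) {π : B →ₗ[A] S}
    (hπ : Function.Surjective π) (hker : LinearMap.ker f ≤ LinearMap.ker π) :
    IsCompositionFactor A S M := by
  let π' : LinearMap.range f →ₗ[A] S :=
    (LinearMap.ker f).liftQ π hker ∘ₗ f.quotKerEquivRange.symm.toLinearMap
  have hπ' : Function.Surjective π' := fun y => by
    obtain ⟨b, rfl⟩ := hπ y
    exact ⟨f.quotKerEquivRange (Submodule.Quotient.mk b), by simp [π']⟩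
  refine ⟨(LinearMap.ker π').map (LinearMap.range f).subtype, LinearMap.range f,
    Submodule.map_subtype_le _ _, ⟨?_⟩⟩
  rw [Submodule.comap_map_eq_of_injective (Submodule.injective_subtype _)]
  exact π'.quotKerEquivOfSurjective hπ'

theorem exists_isCompositionFactor_of_iInf_annihilator_le [IsArtinianRing A] [IsSimpleModule A S]
    {ι : Type*} (M : ι → Type*) [∀ i, AddCommGroup (M i)] [∀ i, Module A (M i)]
    (h : ⨅ i, Module.annihilator A (M i) ≤ Module.annihilator A S) :
    ∃ i, IsCompositionFactor A S (M i) := by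
  have := IsSimpleModule.nontrivial A S
  obtain ⟨s, hs⟩ := exists_ne (0 : S)
  let π : A →ₗ[A] S := LinearMap.toSpanSingleton A S s
  obtain ⟨B, hB, hmin⟩ := WellFounded.has_min (wellFounded_lt (α := Submodule A A))
    {B | ¬ B ≤ LinearMap.ker π} ⟨⊤, fun hle => hs (by simpa [π] using hle (x := 1) trivial)⟩
  obtain ⟨b, hbB, hb⟩ := Set.not_subset.mp hB
  have hbs : b • s ≠ 0 := by simpa [π] using hb
  obtain ⟨i, m, hm⟩ : ∃ i, ∃ m : M i, b • m ≠ 0 := by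
    by_contra! hc
    exact hbs (Module.mem_annihilator.1
      (h (Submodule.mem_iInf _ |>.2 fun i => Module.mem_annihilator.2 (hc i))) s)
  let f : A →ₗ[A] M i := LinearMap.toSpanSingleton A (M i) m
  have hlt : B ⊓ LinearMap.ker f < B :=
    inf_lt_left.2 fun hle => hm (by simpa [f] using hle hbB)
  have hker : B ⊓ LinearMap.ker f ≤ LinearMap.ker π := not_not.1 fun hc => hmin _ hc hlt
  have hπB : Function.Surjective (π ∘ₗ B.subtype) :=
    LinearMap.surjective_of_ne_zero fun h0 =>
      hbs (by simpa [π] using LinearMap.congr_fun h0 ⟨b, hbB⟩)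
  exact ⟨i, isCompositionFactor_of_ker_le_ker (f ∘ₗ B.subtype) hπB fun x hx => hker ⟨x.2, hx⟩⟩

end CompositionFactors

section PGroupsInCharacteristicP

theorem exists_ne_zero_mem_fixedPoints_of_isPGroup {p : ℕ} [Fact p.Prime] {P : Type*} [Group P]
    [Finite P] (hP : IsPGroup p P) {A : Type*} [AddCommGroup A] [Nontrivial A]
    [DistribMulAction P A] (hA : ∀ a : A, p • a = 0) :
    ∃ a ∈ MulAction.fixedPoints P A, a ≠ 0 := by
  obtain ⟨x, hx⟩ := exists_ne (0 : A)
  let E : AddSubgroup A := AddSubgroup.closure (MulAction.orbit P x)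
  have hxE : x ∈ E := AddSubgroup.subset_closure (MulAction.mem_orbit_self x)
  have hE : ∀ g : P, E ≤ E.comap (DistribSMul.toAddMonoidHom A g) := fun g =>
    (AddSubgroup.closure_le _).2 fun _ hy =>
      AddSubgroup.subset_closure (MulAction.mapsTo_smul_orbit g x hy)
  have hpE : ∀ y : E, p • y = 0 := fun y => Subtype.ext (hA y)
  have : Finite E := by
    have : AddGroup.FG E := (AddGroup.fg_iff_addSubgroup_fg E).2
      ((AddSubgroup.fg_iff E).2 ⟨_, rfl, Set.finite_range _⟩)
    exact AddCommGroup.finite_of_fg_isAddTorsion E fun y =>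
      isOfFinAddOrder_iff_nsmul_eq_zero.2 ⟨p, (Fact.out : p.Prime).pos, hpE y⟩
  have hcard : p ∣ Nat.card E := by
    rw [← addOrderOf_eq_prime (hpE ⟨x, hxE⟩) fun h => hx (congrArg Subtype.val h)]
    exact addOrderOf_dvd_natCard _
  let E' : SubMulAction P A := ⟨E, fun g _ hy => hE g hy⟩
  obtain ⟨y, hy, hy0⟩ := hP.exists_fixed_point_of_prime_dvd_card_of_fixed_point E' hcard
    (a := ⟨0, E.zero_mem⟩) fun g => Subtype.ext (smul_zero g)
  exact ⟨y, fun g => congrArg Subtype.val (hy g), fun h => hy0 (Subtype.ext h.symm)⟩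

theorem invariants_ne_bot_of_isPGroup {k P V : Type*} [CommRing k] {q : ℕ} [ExpChar k q] [Group P]
    [Finite P] (hP : IsPGroup q P) [AddCommGroup V] [Module k V] [Nontrivial V]
    (ρ : Representation k P V) : ρ.invariants ≠ ⊥ := by
  rw [Submodule.ne_bot_iff]
  cases ‹ExpChar k q› with
  | zero =>
    obtain ⟨v, hv⟩ := exists_ne (0 : V)
    have hP1 : ∀ g : P, g = 1 := fun g => by simpa using hP g
    exact ⟨v, fun g => by simp [hP1 g], hv⟩
  | prime hq =>
    have : Fact q.Prime := ⟨hq⟩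
    let _ : DistribMulAction P V := DistribMulAction.compHom V ρ
    refine exists_ne_zero_mem_fixedPoints_of_isPGroup hP fun v => ?_
    rw [← Nat.cast_smul_eq_nsmul k, CharP.cast_eq_zero, zero_smul]

theorem le_ker_of_isPGroup_of_isIrreducible {k G V : Type*} [Field k] {q : ℕ} [ExpChar k q]
    [Group G] [AddCommGroup V] [Module k V] (ρ : Representation k G V) [ρ.IsIrreducible]
    (P : Subgroup G) [P.Normal] [Finite P] (hP : IsPGroup q P) : P ≤ MonoidHom.ker ρ := by
  let I : Subrepresentation ρ :=
    ⟨Representation.invariants (ρ.comp P.subtype), fun g _ hv => ρ.le_comap_invariants P g hv⟩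
  have : Nontrivial V := by
    by_contra hV
    rw [not_nontrivial_iff_subsingleton] at hV
    exact bot_ne_top (α := Subrepresentation ρ)
      (Subrepresentation.toSubmodule_injective (Subsingleton.elim _ _))
  have hI : I ≠ ⊥ := fun h =>
    invariants_ne_bot_of_isPGroup hP (ρ.comp P.subtype)
      (congrArg Subrepresentation.toSubmodule h)
  have hI' : I = ⊤ := (eq_bot_or_eq_top I).resolve_left hI
  intro g hg
  refine LinearMap.ext fun v => ?_
  have hv : v ∈ I := hI' ▸ Submodule.mem_top
  exact hv ⟨g, hg⟩

end PGroupsInCharacteristicP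

section MatrixCoefficients

/-- The evaluation at an endomorphism `x` of the formal products of matrix coefficients: a word
`(v₁, l₁) ⋯ (vₙ, lₙ)` is sent to `l₁ (x v₁) ⋯ lₙ (x vₙ)`. Words, rather than polynomial functions,
make this a homomorphism out of a single monoid, as independence of characters requires. -/
def matrixCoeffHom {k V : Type*} [CommRing k] [AddCommGroup V] [Module k V]
    (x : Module.End k V) : FreeMonoid (V × Module.Dual k V) →* k :=
  FreeMonoid.lift fun vl => vl.2 (x vl.1)

theorem matrixCoeffHom_injective {k V : Type*} [CommRing k] [AddCommGroup V] [Module k V]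
    [Module.Projective k V] : Function.Injective (matrixCoeffHom (k := k) (V := V)) := by
  intro x y hxy
  refine LinearMap.ext fun v => sub_eq_zero.1 ((Module.forall_dual_apply_eq_zero_iff k _).1 ?_)
  intro l
  simpa [matrixCoeffHom, sub_eq_zero] using DFunLike.congr_fun hxy (FreeMonoid.of (v, l))

variable {k G : Type} [CommRing k] [Monoid G] (X : Rep k G)

theorem exists_matrixCoeffHom_eq_repTensorPow (w : FreeMonoid (X × Module.Dual k X)) :
    ∃ (n : ℕ) (v : repTensorPow k G X n) (l : Module.Dual k (repTensorPow k G X n)),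
      ∀ g, matrixCoeffHom (X.ρ g) w = l ((repTensorPow k G X n).ρ g v) := by
  induction w using FreeMonoid.inductionOn' with
  | one => exact ⟨0, (1 : k), (LinearMap.id : k →ₗ[k] k), fun g => map_one _⟩
  | of_mul vl w ih =>
    obtain ⟨n, v, l, hl⟩ := ih
    refine ⟨n + 1, (v ⊗ₜ[k] vl.1 : repTensorPow k G X n ⊗[k] X),
      TensorProduct.dualDistrib k (repTensorPow k G X n) X (l ⊗ₜ vl.2), fun g => ?_⟩
    calc matrixCoeffHom (X.ρ g) (FreeMonoid.of vl * w)
        = l ((repTensorPow k G X n).ρ g v) * vl.2 (X.ρ g vl.1) := by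
          rw [map_mul, hl, mul_comm]
          rfl
      _ = _ := (TensorProduct.dualDistrib_apply ..).symm

theorem mapDomain_eq_zero_of_forall_repTensorPow [IsDomain k] [Module.Projective k X] {a : k[G]}
    (ha : ∀ n, (repTensorPow k G X n).ρ.asAlgebraHom a = 0) :
    MonoidAlgebra.mapDomain X.ρ a = 0 := by
  have hindep : LinearIndependent k fun x : Module.End k X => (matrixCoeffHom x : _ → k) :=
    (linearIndependent_monoidHom _ k).comp matrixCoeffHom matrixCoeffHom_injective
  refine MonoidAlgebra.coeff_injective (linearIndependent_iff.1 hindep _ (funext fun w => ?_))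
  obtain ⟨n, v, l, hw⟩ := exists_matrixCoeffHom_eq_repTensorPow X w
  calc _ = a.coeff.sum fun g c => c * matrixCoeffHom (X.ρ g) w := by
        rw [MonoidAlgebra.coeff_mapDomain, Finsupp.linearCombination_mapDomain]
        simp [Finsupp.linearCombination_apply, Finsupp.sum]
    _ = l ((repTensorPow k G X n).ρ.asAlgebraHom a v) := by
        simp [hw, Representation.asAlgebraHom_def, MonoidAlgebra.lift_apply, Finsupp.sum]
    _ = 0 := by simp [ha]

end MatrixCoefficients

theorem lift_eq_zero_of_mapDomain_eq_zero {k A G H : Type*} [CommSemiring k] [Semiring A]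
    [Algebra k A] [Monoid G] {f : G → H} {φ : G →* A} (hφ : Function.FactorsThrough φ f)
    {a : k[G]} (ha : MonoidAlgebra.mapDomain f a = 0) : MonoidAlgebra.lift k A G φ a = 0 := by
  obtain ⟨ψ, hψ⟩ := (Function.factorsThrough_iff φ).1 hφ
  calc MonoidAlgebra.lift k A G φ a
      = Finsupp.linearCombination k ψ (MonoidAlgebra.mapDomain f a).coeff := by
        rw [MonoidAlgebra.coeff_mapDomain, Finsupp.linearCombination_mapDomain, ← hψ,
          MonoidAlgebra.lift_apply, Finsupp.linearCombination_apply]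
    _ = 0 := by simp [ha]

theorem asAlgebraHom_ofModule' {k G S : Type*} [CommSemiring k] [Monoid G] [AddCommMonoid S]
    [Module k S] [Module k[G] S] [IsScalarTower k k[G] S] :
    (Representation.ofModule' (k := k) (G := G) S).asAlgebraHom = Algebra.lsmul k k S :=
  (MonoidAlgebra.lift k (Module.End k S) G).apply_symm_apply _

theorem isIrreducible_ofModule' {k G S : Type*} [Field k] [Monoid G] [AddCommGroup S] [Module k S]
    [Module k[G] S] [IsScalarTower k k[G] S] [IsSimpleModule k[G] S] :
    (Representation.ofModule' (k := k) (G := G) S).IsIrreducible := by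
  let σ : Representation k G S := Representation.ofModule' S
  let e : σ.asModule ≃ₗ[k[G]] S :=
    { σ.asModuleEquiv with
      map_smul' := fun a s =>
        (σ.asModuleEquiv_map_smul a s).trans (by rw [asAlgebraHom_ofModule']; rfl) }
  exact (Representation.irreducible_iff_isSimpleModule_asModule σ).2 (IsSimpleModule.congr e)

theorem mem_annihilator_of_mapDomain_eq_zero {k G H S : Type*} [Field k] {q : ℕ} [ExpChar k q]
    [Group G] [Monoid H] [AddCommGroup S] [Module k[G] S] [IsSimpleModule k[G] S] {f : G →* H}
    [Finite f.ker] (hf : IsPGroup q f.ker) {a : k[G]} (ha : MonoidAlgebra.mapDomain f a = 0) :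
    a ∈ Module.annihilator k[G] S := by
  let _ : Module k S := Module.compHom S (algebraMap k k[G])
  have : IsScalarTower k k[G] S := IsScalarTower.of_compHom k k[G] S
  let σ : Representation k G S := Representation.ofModule' S
  have : σ.IsIrreducible := isIrreducible_ofModule'
  have hker : f.ker ≤ MonoidHom.ker σ := le_ker_of_isPGroup_of_isIrreducible σ _ hf
  have hσ : Function.FactorsThrough σ f := fun _ _ hgh =>
    (MonoidHom.eq_iff σ).2 (hker ((MonoidHom.eq_iff f).1 hgh))
  have hσ0 : σ.asAlgebraHom a = 0 := lift_eq_zero_of_mapDomain_eq_zero hσ ha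
  rw [asAlgebraHom_ofModule'] at hσ0
  exact Module.mem_annihilator.2 (LinearMap.congr_fun hσ0)

theorem tensorRich_of_isPGroup_ker {F Q : Type} [Field F] {q : ℕ} [ExpChar F q] [Group Q]
    [Finite Q] (X : Rep F Q) (hX : IsPGroup q (MonoidHom.ker X.ρ)) : TensorRich F Q X := by
  intro S _ _ hS
  have : IsArtinianRing F[Q] := IsArtinianRing.of_finite F _
  refine exists_isCompositionFactor_of_iInf_annihilator_le
    (fun n => (repTensorPow F Q X n).ρ.asModule) fun a ha => ?_
  refine mem_annihilator_of_mapDomain_eq_zero hX ?_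
  exact mapDomain_eq_zero_of_forall_repTensorPow X fun n =>
    LinearMap.ext (Module.mem_annihilator.1 (Submodule.mem_iInf _ |>.1 ha n))

section PRegularElements

variable {G : Type*} [Group G]

/-- The subgroup generated by the `p`-regular elements of `K`. For `p = 0` and `G` finite every
element is `p`-regular, as `0` does not divide a positive order. -/
def pRegularSubgroup (p : ℕ) (K : Subgroup G) : Subgroup G :=
  Subgroup.closure {g | g ∈ K ∧ ¬ p ∣ orderOf g}

theorem pRegularSubgroup_le (p : ℕ) (K : Subgroup G) : pRegularSubgroup p K ≤ K :=
  (Subgroup.closure_le K).2 fun _ hg => hg.1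

instance pRegularSubgroup_normal (p : ℕ) (K : Subgroup G) [hK : K.Normal] :
    (pRegularSubgroup p K).Normal := by
  rw [← Subgroup.normalizer_eq_top_iff, eq_top_iff]
  refine le_trans (fun h _ => ?_) (Subgroup.normalizer_le_normalizer_closure _)
  refine Subgroup.mem_set_normalizer_iff.2 fun g => and_congr ?_ ?_
  · exact ⟨fun hg => hK.conj_mem g hg h, fun hg => by simpa [mul_assoc] using hK.conj_mem _ hg h⁻¹⟩
  · rw [← MulAut.conj_apply, MulEquiv.orderOf_eq]

theorem exists_not_dvd_orderOf_pow_expChar_pow (F : Type*) [Ring F] (p q : ℕ) [CharP F p]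
    [ExpChar F q] {g : G} (hg : IsOfFinOrder g) : ∃ k, ¬ p ∣ orderOf (g ^ q ^ k) := by
  cases ‹ExpChar F q› with
  | zero =>
    obtain rfl : p = 0 := CharP.eq F ‹_› (CharP.ofCharZero F)
    exact ⟨0, by simpa using hg.orderOf_pos.ne'⟩
  | prime hq =>
    obtain rfl : p = q := CharP.eq F ‹_› ‹_›
    obtain ⟨k, m, hm, hkm⟩ :=
      Nat.exists_eq_pow_mul_and_not_dvd hg.orderOf_pos.ne' p hq.ne_one
    have hpk : 0 < p ^ k := pow_pos hq.pos k
    refine ⟨k, ?_⟩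
    rwa [orderOf_pow_of_dvd hpk.ne' ⟨m, hkm⟩, hkm, Nat.mul_div_cancel_left _ hpk]

theorem isPGroup_map_mk_pRegularSubgroup [Finite G] (F : Type*) [Ring F] (p q : ℕ) [CharP F p]
    [ExpChar F q] (K : Subgroup G) [K.Normal] :
    IsPGroup q (K.map (QuotientGroup.mk' (pRegularSubgroup p K))) := by
  rintro ⟨_, g, hg, rfl⟩
  obtain ⟨k, hk⟩ := exists_not_dvd_orderOf_pow_expChar_pow F p q (isOfFinOrder_of_finite g)
  refine ⟨k, Subtype.ext ((QuotientGroup.eq_one_iff (g ^ q ^ k)).2 ?_)⟩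
  exact Subgroup.subset_closure ⟨pow_mem hg _, hk⟩

end PRegularElements

theorem stmt17_general (F : Type) [Field F] (p : ℕ) [CharP F p]
    (G : Type) [Group G] [Finite G]
    (W : Type) [AddCommGroup W] [Module F W]
    (ρ : Representation F G W)
    (N : Subgroup G)
    (hN : N = Subgroup.closure {g : G | ρ g = 1 ∧ ¬ p ∣ orderOf g}) :
    ∃ hnorm : N.Normal,
      letI := hnorm
      (∃ ρbar : Representation F (G ⧸ N) W, ∀ g : G, ρbar (g : G ⧸ N) = ρ g) ∧
        ∀ ρbar : Representation F (G ⧸ N) W,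
          (∀ g : G, ρbar (g : G ⧸ N) = ρ g) →
            TensorRich F (G ⧸ N) (Rep.of ρbar) := by
  obtain ⟨q, _⟩ := ExpChar.exists F
  let K : Subgroup G := MonoidHom.ker ρ
  obtain rfl : N = pRegularSubgroup p K := hN
  refine ⟨inferInstance, ⟨QuotientGroup.lift _ ρ (pRegularSubgroup_le p K), fun _ => rfl⟩,
    fun ρbar hρbar => tensorRich_of_isPGroup_ker (q := q) _ ?_⟩
  have hcomp : MonoidHom.comp ρbar (QuotientGroup.mk' _) = ρ := MonoidHom.ext hρbar
  have hker : MonoidHom.ker ρbar = K.map (QuotientGroup.mk' (pRegularSubgroup p K)) := by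
    rw [← Subgroup.map_comap_eq_self_of_surjective (QuotientGroup.mk'_surjective _)
      (MonoidHom.ker ρbar), MonoidHom.comap_ker, hcomp]
  change IsPGroup q (MonoidHom.ker ρbar)
  rw [hker]
  exact isPGroup_map_mk_pRegularSubgroup F p q K

/-- Proposition 7.5 of the paper. Let `ρ : G → GL(W)` be a
finite-dimensional representation over an algebraically closed field `F` of
prime characteristic `p`, and let `N` be the subgroup of `G` generated by the
`p`-regular elements of `ker ρ`. Then `N` is normal in `G`, and `ρ` factors
through a representation `ρ̄` of `G/N` which is tensor-rich. -/
theorem stmt17 (F : Type) [Field F] [IsAlgClosed F] (p : ℕ) [Fact p.Prime] [CharP F p]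
    (G : Type) [Group G] [Fintype G]
    (W : Type) [AddCommGroup W] [Module F W] [FiniteDimensional F W]
    (ρ : Representation F G W)
    (N : Subgroup G)
    (hN : N = Subgroup.closure {g : G | ρ g = 1 ∧ ¬ p ∣ orderOf g}) :
    ∃ hnorm : N.Normal,
      letI := hnorm
      (∃ ρbar : Representation F (G ⧸ N) W, ∀ g : G, ρbar (g : G ⧸ N) = ρ g) ∧
        ∀ ρbar : Representation F (G ⧸ N) W,
          (∀ g : G, ρbar (g : G ⧸ N) = ρ g) →
            TensorRich F (G ⧸ N) (Rep.of ρbar) :=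
  stmt17_general F p G W ρ N hN
end

section
/- Let F be an algebraically closed field, let A be a finite-dimensional Hopf algebra over F, and let V be a finite-dimensional (left) A-module. For k ≥ 0, let V^{⊗k} denote the k-fold tensor power of V, made into an A-module inductively by V^{⊗0} := ε (the field F with A acting through the counit) and V^{⊗(k+1)} := V^{⊗k} ⊗_F V with the A-module structure obtained by restricting the natural (A ⊗_F A)-module structure along the comultiplication Δ : A → A ⊗_F A. If the intersection ⋂_{k ≥ 0} Ann_A(V^{⊗k}) of the annihilator ideals of all tensor powers of V is the zero ideal, then V is tensor-rich: every simple A-module S is a composition factor of V^{⊗k} for some k (i.e., there exist A-submodules N ⊆ M ⊆ V^{⊗k} with M/N ≅ S). -/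
/-- The carrier of the `n`-th tensor power of an `F`-vector space `V`:
`V^{⊗0} = F` and `V^{⊗(n+1)} = V^{⊗n} ⊗[F] V`. -/
noncomputable def hopfTensorPow (F : Type) [Field F] (V : Type) [AddCommGroup V]
    [Module F V] : ℕ → ModuleCat F
  | 0 => ModuleCat.of F F
  | n + 1 => ModuleCat.of F (TensorProduct F (hopfTensorPow F V n) V)

/-- The representation of the Hopf algebra `A` on the `n`-th tensor power of an
`A`-module `V`: on `V^{⊗0} = F` the algebra `A` acts through the counit, and on
`V^{⊗(n+1)} = V^{⊗n} ⊗[F] V` it acts by restricting the natural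
`(A ⊗[F] A)`-action (factorwise) along the comultiplication `Δ : A → A ⊗[F] A`. -/
noncomputable def hopfTensorPowRep (F : Type) [Field F] (A : Type) [Ring A]
    [HopfAlgebra F A] (V : Type) [AddCommGroup V] [Module F V] [Module A V]
    [IsScalarTower F A V] :
    (n : ℕ) → (A →ₐ[F] Module.End F (hopfTensorPow F V n))
  | 0 => (Algebra.ofId F (Module.End F (hopfTensorPow F V 0))).comp
      (Bialgebra.counitAlgHom F A)
  | n + 1 =>
    (((Module.endTensorEndAlgHom (R := F) (S := F) (A := F)
            (M := hopfTensorPow F V n) (N := V)).comp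
        (Algebra.TensorProduct.map (hopfTensorPowRep F A V n) (Algebra.lsmul F F V))).comp
      (Bialgebra.comulAlgHom F A))

/-- The `A`-module structure coming from a representation
`ρ : A →ₐ[F] End_F(X)`. -/
noncomputable def moduleOfRep {F A X : Type*} [CommSemiring F] [Semiring A] [Algebra F A]
    [AddCommMonoid X] [Module F X] (ρ : A →ₐ[F] Module.End F X) : Module A X :=
  Module.compHom X ρ.toRingHom

/-!
The kernels of the orbit maps `A → V^{⊗n}`, `a ↦ a • w`, intersect in `⋂ₙ Ann (V^{⊗n})`. Fix a
nonzero orbit map `A → S`; since `A` is Artinian, there is a left ideal `K` minimal among those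
this map does not kill. If `⋂ₙ Ann (V^{⊗n})` annihilates `S`, then some orbit map `A → V^{⊗n}`
does not kill `K` either. Its kernel meets `K` in a proper submodule, which `A → S` kills by
minimality of `K`. Hence `K → S`, which is surjective because `S` is simple, descends to the
image of `K` in `V^{⊗n}`.
-/

section Subquotient

variable {R S X M : Type*} [Ring R] [AddCommGroup S] [Module R S] [AddCommGroup X] [Module R X]
  [AddCommGroup M] [Module R M]

variable (R S X) in
/-- `S` is a subquotient of `X`: it is isomorphic to `M / N` for some submodules `N ≤ M` of `X`.
For simple `S` this says that `S` is a composition factor of `X`. -/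
def IsSubquotient : Prop :=
  ∃ N M : Submodule R X, N ≤ M ∧ Nonempty ((M ⧸ N.comap M.subtype) ≃ₗ[R] S)

theorem IsSubquotient.of_surjective {P : Submodule R X} (h : P →ₗ[R] S)
    (hh : Function.Surjective h) : IsSubquotient R S X := by
  refine ⟨(LinearMap.ker h).map P.subtype, P, Submodule.map_subtype_le _ _, ?_⟩
  rw [Submodule.comap_map_eq_of_injective P.subtype_injective]
  exact ⟨h.quotKerEquivOfSurjective hh⟩

theorem IsSubquotient.of_ker_le_ker (g : M →ₗ[R] X) (f : M →ₗ[R] S)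
    (hf : Function.Surjective f) (hgf : LinearMap.ker g ≤ LinearMap.ker f) :
    IsSubquotient R S X := by
  have hlift : Function.Surjective ((LinearMap.ker g).liftQ f hgf) := by
    rw [← LinearMap.range_eq_top, Submodule.range_liftQ, LinearMap.range_eq_top.2 hf]
  exact .of_surjective ((LinearMap.ker g).liftQ f hgf ∘ₗ g.quotKerEquivRange.symm.toLinearMap)
    (hlift.comp g.quotKerEquivRange.symm.surjective)

theorem exists_isSubquotient_of_iInf_ker_le_ker [IsArtinian R M] [IsSimpleModule R S]
    {ι : Type*} {W : ι → Type*} [∀ i, AddCommGroup (W i)] [∀ i, Module R (W i)]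
    (g : ∀ i, M →ₗ[R] W i) {f : M →ₗ[R] S} (hf : f ≠ 0)
    (hgf : ⨅ i, LinearMap.ker (g i) ≤ LinearMap.ker f) :
    ∃ i, IsSubquotient R S (W i) := by
  obtain ⟨K, hKf, hmin⟩ := IsArtinian.set_has_minimal {K : Submodule R M | ¬K ≤ LinearMap.ker f}
    ⟨⊤, fun h ↦ hf (LinearMap.ker_eq_top.1 (top_le_iff.1 h))⟩
  obtain ⟨i, hKi⟩ : ∃ i, ¬K ≤ LinearMap.ker (g i) := by
    by_contra! h
    exact hKf ((le_iInf h).trans hgf)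
  have hinf : K ⊓ LinearMap.ker (g i) ≤ LinearMap.ker f :=
    not_not.1 fun h ↦ hmin _ h (inf_lt_left.2 hKi)
  have hfK : f.domRestrict K ≠ 0 := fun h ↦
    hKf fun m hm ↦ LinearMap.congr_fun h ⟨m, hm⟩
  exact ⟨i, .of_ker_le_ker ((g i).domRestrict K) (f.domRestrict K)
    (LinearMap.surjective_of_ne_zero hfK) fun m hm ↦ hinf ⟨m.2, hm⟩⟩

theorem exists_isSubquotient_of_iInf_annihilator_le [IsArtinianRing R] [IsSimpleModule R S]
    {ι : Type*} {W : ι → Type*} [∀ i, AddCommGroup (W i)] [∀ i, Module R (W i)]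
    (hW : ⨅ i, Module.annihilator R (W i) ≤ Module.annihilator R S) :
    ∃ i, IsSubquotient R S (W i) := by
  have := IsSimpleModule.nontrivial R S
  obtain ⟨s, hs⟩ := exists_ne (0 : S)
  let orbitMap (p : Σ i, W i) : R →ₗ[R] W p.1 := LinearMap.toSpanSingleton R _ p.2
  have hker : ⨅ p, LinearMap.ker (orbitMap p) ≤
      LinearMap.ker (LinearMap.toSpanSingleton R S s) := by
    intro a ha
    have haW : a ∈ ⨅ i, Module.annihilator R (W i) := by
      simp only [Submodule.mem_iInf, Module.mem_annihilator] at ha ⊢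
      exact fun i w ↦ ha ⟨i, w⟩
    exact Module.mem_annihilator.1 (hW haW) s
  obtain ⟨p, hp⟩ := exists_isSubquotient_of_iInf_ker_le_ker orbitMap
    ((LinearMap.toSpanSingleton_eq_zero_iff R S).not.2 hs) hker
  exact ⟨p.1, hp⟩

end Subquotient

theorem mem_annihilator_moduleOfRep {F A X : Type*} [CommSemiring F] [Semiring A] [Algebra F A]
    [AddCommMonoid X] [Module F X] (ρ : A →ₐ[F] Module.End F X) {a : A} :
    letI : Module A X := moduleOfRep ρ
    a ∈ Module.annihilator A X ↔ ρ a = 0 := by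
  let : Module A X := moduleOfRep ρ
  exact Module.mem_annihilator.trans (LinearMap.ext_iff (f := ρ a) (g := 0)).symm

theorem stmt18_general (F : Type) [Field F] (A : Type) [Ring A] [HopfAlgebra F A]
    [IsArtinianRing A] (V : Type) [AddCommGroup V] [Module F V] [Module A V]
    [IsScalarTower F A V] (S : Type*) [AddCommGroup S] [Module A S] [IsSimpleModule A S]
    (hann : ⋂ n : ℕ, {a : A | hopfTensorPowRep F A V n a = 0} ⊆ Module.annihilator A S) :
    ∃ n : ℕ,
      letI : Module A (hopfTensorPow F V n) := moduleOfRep (hopfTensorPowRep F A V n)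
      IsSubquotient A S (hopfTensorPow F V n) := by
  let (n : ℕ) : Module A (hopfTensorPow F V n) := moduleOfRep (hopfTensorPowRep F A V n)
  refine exists_isSubquotient_of_iInf_annihilator_le fun a ha ↦ hann (Set.mem_iInter.2 fun n ↦ ?_)
  exact (mem_annihilator_moduleOfRep _).1 ((Submodule.mem_iInf _).1 ha n)

/-- Theorem 6.8(iii) of the paper. Let `A` be a
finite-dimensional Hopf algebra over an algebraically closed field `F` and `V`
a finite-dimensional `A`-module. If the intersection of the annihilators of all
tensor powers `V^{⊗n}` is the zero ideal, then `V` is tensor-rich: every simple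
`A`-module `S` is a composition factor of some `V^{⊗n}`. -/
theorem stmt18 (F : Type) [Field F] [IsAlgClosed F]
    (A : Type) [Ring A] [HopfAlgebra F A] [FiniteDimensional F A]
    (V : Type) [AddCommGroup V] [Module F V] [Module A V] [IsScalarTower F A V]
    [FiniteDimensional F V]
    (hann : ⋂ n : ℕ, {a : A | hopfTensorPowRep F A V n a = 0} = {0}) :
    ∀ (S : Type) [AddCommGroup S] [Module A S], IsSimpleModule A S →
      ∃ n : ℕ,
        letI : Module A (hopfTensorPow F V n) := moduleOfRep (hopfTensorPowRep F A V n)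
        ∃ N M : Submodule A (hopfTensorPow F V n), N ≤ M ∧
          Nonempty ((↥M ⧸ Submodule.comap M.subtype N) ≃ₗ[A] S) := by
  intro S _ _ _
  have : IsArtinianRing A := IsArtinianRing.of_finite F A
  exact stmt18_general F A V S (hann ▸ Set.singleton_subset_iff.2 (zero_mem _))
end
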